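/- arXiv:1210.0098 — 2 statements merged into one kernel-verified Lean document; each statement's English description precedes it below -/
import Mathlib

section
/- Let N ≥ 2, m_1,…,m_N > 0, h ∈ ℝ, and let V(u_1,…,u_N) = (1/2) Σ_{1≤i≠j≤N} V_{ij}(u_i − u_j) with each V_{ij} : ℝ^n \ {0} → ℝ continuously differentiable and satisfying (V8') V_{ij}(ξ) = V_{ji}(ξ) for all ξ ≠ 0. Let ū = (ū_1,…,ū_N) : ℝ → (ℝ^n)^N be twice continuously differentiable, 1-periodic, antiperiodic in the sense that ū_i(t + 1/2) = −ū_i(t) for all i and t, and non-collision (ū_i(t) ≠ ū_j(t) for all t, i ≠ j). Suppose that for every continuously differentiable 1-periodic v : ℝ → (ℝ^n)^N which is antiperiodic (v_i(t + 1/2) = −v_i(t)), the function s ↦ f(ū + s v) has derivative 0 at s = 0, where f(u) = (1/2)(∫₀¹ Σ m_i |u̇_i|² dt)·(∫₀¹ (h − V(u)) dt), and suppose f(ū) > 0. Define T > 0 by 1/T² = (∫₀¹ (h − V(ū)) dt)/((1/2)∫₀¹ Σ m_i |ū̇_i|² dt). Then q(t) := ū(t/T) is a non-constant T-periodic non-collision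 solution of (Ph): m_i q̈_i(t) + ∇_{u_i}V(q(t)) = 0 and (1/2) Σ m_i |q̇_i(t)|² + V(q(t)) = h for all t. -/
open Finset

/-!
If `V i j = V j i`, then `V` is even, so along an antiperiodic loop the gradient of `V` is again
antiperiodic. Antiperiodic variations therefore already detect the full Euler-Lagrange equation:
a continuous antiperiodic function has an antiperiodic primitive, so the test loop of the
du Bois-Reymond argument can be chosen antiperiodic.

Write `f = K * P` with `K` the kinetic and `P` the potential factor. Dividing `f'(u) = 0` by `K`
gives the weak form of Newton's equation with the masses `m i` replaced by `(P / K) * m i`. Its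
energy is constant, and by the choice of the factor `P / K` the mean of the energy over a period
is `h`. Since `P / K = 1 / T ^ 2`, slowing time down by `T` restores the masses `m i`.
-/

open scoped InnerProductSpace Topology

section ParametricIntegral

variable {E G : Type*} [NormedAddCommGroup E] [NormedSpace ℝ E] [NormedAddCommGroup G]
  [NormedSpace ℝ G]

lemma hasDerivAt_intervalIntegral_of_continuousOn {Φ Φ' : ℝ → ℝ → G} {s₀ ε a b : ℝ} (hε : 0 < ε)
    (hΦ : ∀ s ∈ Metric.closedBall s₀ ε, ContinuousOn (Φ s) (Set.uIcc a b))
    (hΦ' : ContinuousOn (Function.uncurry Φ') (Metric.closedBall s₀ ε ×ˢ Set.uIcc a b))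
    (hderiv : ∀ s ∈ Metric.closedBall s₀ ε, ∀ t ∈ Set.uIcc a b,
      HasDerivAt (fun s => Φ s t) (Φ' s t) s) :
    HasDerivAt (fun s => ∫ t in a..b, Φ s t) (∫ t in a..b, Φ' s₀ t) s₀ := by
  have hs₀ : s₀ ∈ Metric.closedBall s₀ ε := Metric.mem_closedBall_self hε.le
  have hball : Metric.closedBall s₀ ε ∈ 𝓝 s₀ := Metric.closedBall_mem_nhds s₀ hε
  have hΦ'₀ : ContinuousOn (Φ' s₀) (Set.uIcc a b) :=
    hΦ'.comp (f := fun t => (s₀, t)) (by fun_prop) fun t ht => ⟨hs₀, ht⟩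
  obtain ⟨C, hC⟩ := ((isCompact_closedBall s₀ ε).prod isCompact_uIcc).exists_bound_of_continuousOn
    hΦ'
  refine (intervalIntegral.hasDerivAt_integral_of_dominated_loc_of_deriv_le (bound := fun _ => C)
    hball ?_ (hΦ s₀ hs₀).intervalIntegrable
    (intervalIntegrable_iff.1 hΦ'₀.intervalIntegrable).aestronglyMeasurable ?_
    intervalIntegrable_const ?_).2
  · filter_upwards [hball] with s hs
    exact (intervalIntegrable_iff.1 (hΦ s hs).intervalIntegrable).aestronglyMeasurable
  · exact .of_forall fun t ht s hs => hC (s, t) ⟨hs, Set.uIoc_subset_uIcc ht⟩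
  · exact .of_forall fun t ht s hs => hderiv s hs t (Set.uIoc_subset_uIcc ht)

lemma exists_closedBall_forall_add_smul_mem {Ω : Set E} (hΩ : IsOpen Ω) {u v : ℝ → E}
    (hu : Continuous u) (hv : Continuous v) (huΩ : ∀ t, u t ∈ Ω) (a b : ℝ) :
    ∃ ε > 0, ∀ s ∈ Metric.closedBall (0 : ℝ) ε, ∀ t ∈ Set.uIcc a b, u t + s • v t ∈ Ω := by
  have hcont : Continuous fun p : ℝ × ℝ => u p.2 + p.1 • v p.2 := by fun_prop
  have htube : ∀ᶠ s in 𝓝 (0 : ℝ), ∀ t ∈ Set.uIcc a b, u t + s • v t ∈ Ω :=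
    isCompact_uIcc.eventually_forall_of_forall_eventually fun t _ =>
      hcont.continuousAt.eventually_mem (hΩ.mem_nhds (by simpa using huΩ t))
  exact Metric.nhds_basis_closedBall.mem_iff.1 htube

lemma hasDerivAt_intervalIntegral_add_smul {Ω : Set E} (hΩ : IsOpen Ω) {F : E → G}
    (hF : ContDiffOn ℝ 1 F Ω) {u v : ℝ → E} (hu : Continuous u) (hv : Continuous v)
    (huΩ : ∀ t, u t ∈ Ω) (a b : ℝ) :
    HasDerivAt (fun s : ℝ => ∫ t in a..b, F (u t + s • v t))
      (∫ t in a..b, fderiv ℝ F (u t) (v t)) 0 := by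
  obtain ⟨ε, hε, htube⟩ := exists_closedBall_forall_add_smul_mem hΩ hu hv huΩ a b
  have hfderiv : ContinuousOn (fderiv ℝ F) Ω := hF.continuousOn_fderiv_of_isOpen hΩ le_rfl
  have hF' : ContinuousOn (fun p : ℝ × ℝ => fderiv ℝ F (u p.2 + p.1 • v p.2) (v p.2))
      (Metric.closedBall 0 ε ×ˢ Set.uIcc a b) :=
    (hfderiv.comp (by fun_prop) fun p hp => htube p.1 hp.1 p.2 hp.2).clm_apply (by fun_prop)
  simpa using hasDerivAt_intervalIntegral_of_continuousOn (Φ := fun s t => F (u t + s • v t))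
    (Φ' := fun s t => fderiv ℝ F (u t + s • v t) (v t)) hε
    (fun s hs => hF.continuousOn.comp (by fun_prop) (htube s hs)) hF' fun s hs t ht => by
      have hF_at := ((hF.differentiableOn one_ne_zero).differentiableAt
        (hΩ.mem_nhds (htube s hs t ht))).hasFDerivAt
      have hline : HasDerivAt (fun s : ℝ => u t + s • v t) (v t) s := by
        simpa using ((hasDerivAt_id s).smul_const (v t)).const_add (u t)
      exact hF_at.comp_hasDerivAt s hline

end ParametricIntegral

section Antiperiodic

lemma antiperiodic_deriv {E : Type*} [NormedAddCommGroup E] [NormedSpace ℝ E] {f : ℝ → E} {c : ℝ}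
    (hf : Function.Antiperiodic f c) : Function.Antiperiodic (deriv f) c := fun t => by
  rw [← deriv_comp_add_const, hf.funext, deriv.neg']

/-- The primitive `∫₀ᵗ g` satisfies `G (t + c) + G t = const`, so a shift by half of this constant
makes it antiperiodic. -/
lemma exists_antiperiodic_primitive {E : Type*} [NormedAddCommGroup E] [NormedSpace ℝ E]
    [CompleteSpace E] {g : ℝ → E} {c : ℝ} (hg : Continuous g) (hgc : Function.Antiperiodic g c) :
    ∃ G : ℝ → E, (∀ t, HasDerivAt G (g t) t) ∧ Function.Antiperiodic G c := by
  set G : ℝ → E := fun t => ∫ x in (0 : ℝ)..t, g x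
  have hG : ∀ t, HasDerivAt G (g t) t := fun t => hg.integral_hasStrictDerivAt 0 t |>.hasDerivAt
  have hsum : ∀ t, HasDerivAt (fun t => G (t + c) + G t) 0 t := fun t => by
    simpa [hgc t] using ((hG (t + c)).comp_add_const t c).fun_add (hG t)
  have hconst : ∀ t, G (t + c) + G t = G (0 + c) + G 0 := fun t =>
    is_const_of_deriv_eq_zero (fun t => (hsum t).differentiableAt) (fun t => (hsum t).deriv) t 0
  refine ⟨fun t => G t - (1 / 2 : ℝ) • (G (0 + c) + G 0), fun t => (hG t).sub_const _, fun t => ?_⟩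
  beta_reduce
  rw [← hconst t]
  module

lemma eq_zero_of_integral_norm_sq_eq_zero {E : Type*} [NormedAddCommGroup E] {W : ℝ → E} {T : ℝ}
    (hW : Continuous W) (hper : Function.Periodic W T) (hT : 0 < T)
    (hint : ∫ t in (0 : ℝ)..T, ‖W t‖ ^ 2 = 0) : W = 0 := by
  by_contra! hne
  obtain ⟨x, hx⟩ := Function.ne_iff.1 hne
  obtain ⟨t, ht, hxt⟩ := hper.exists_mem_Ico₀ hT x
  refine (intervalIntegral.integral_pos (f := fun t => ‖W t‖ ^ 2) hT (by fun_prop)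
    (fun t _ => sq_nonneg _) ⟨t, Set.Ico_subset_Icc_self ht, ?_⟩).ne' hint
  rw [← hxt]
  exact pow_pos (norm_pos_iff.2 hx) 2

variable {E : Type*} [NormedAddCommGroup E] [InnerProductSpace ℝ E]

lemma integral_inner_deriv_eq_neg_of_periodic {F F' G G' : ℝ → E} {T : ℝ}
    (hF : ∀ t, HasDerivAt F (F' t) t) (hG : ∀ t, HasDerivAt G (G' t) t) (hF' : Continuous F')
    (hG' : Continuous G') (hFT : Function.Periodic F T) (hGT : Function.Periodic G T) :
    ∫ t in (0 : ℝ)..T, ⟪F t, G' t⟫_ℝ = -∫ t in (0 : ℝ)..T, ⟪F' t, G t⟫_ℝ := by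
  have hFc : Continuous F := continuous_iff_continuousAt.2 fun t => (hF t).continuousAt
  have hGc : Continuous G := continuous_iff_continuousAt.2 fun t => (hG t).continuousAt
  have hparts : ∫ t in (0 : ℝ)..T, (⟪F t, G' t⟫_ℝ + ⟪F' t, G t⟫_ℝ) = ⟪F T, G T⟫_ℝ - ⟪F 0, G 0⟫_ℝ :=
    intervalIntegral.integral_eq_sub_of_hasDerivAt (fun t _ => (hF t).inner ℝ (hG t))
      (Continuous.intervalIntegrable (by fun_prop) _ _)
  rw [hFT.eq, hGT.eq, sub_self, intervalIntegral.integral_add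
    (Continuous.intervalIntegrable (by fun_prop) _ _)
    (Continuous.intervalIntegrable (by fun_prop) _ _)] at hparts
  exact eq_neg_of_add_eq_zero_left hparts

/-- The du Bois-Reymond lemma for antiperiodic loops. If `G` is an antiperiodic primitive of `g`,
then `p - G` is itself the derivative of an antiperiodic loop, so it may be tested against. -/
lemma hasDerivAt_of_forall_integral_inner_eq [CompleteSpace E] {p g : ℝ → E} {c : ℝ} (hc : 0 < c)
    (hp : Continuous p) (hpc : Function.Antiperiodic p c)
    (hg : Continuous g) (hgc : Function.Antiperiodic g c)
    (hweak : ∀ w w' : ℝ → E, (∀ t, HasDerivAt w (w' t) t) → Continuous w' →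
      Function.Antiperiodic w c →
      ∫ t in (0 : ℝ)..2 * c, ⟪p t, w' t⟫_ℝ = -∫ t in (0 : ℝ)..2 * c, ⟪g t, w t⟫_ℝ) (t : ℝ) :
    HasDerivAt p (g t) t := by
  obtain ⟨G, hG, hGc⟩ := exists_antiperiodic_primitive hg hgc
  have hGcont : Continuous G := continuous_iff_continuousAt.2 fun t => (hG t).continuousAt
  have hpG : Continuous (p - G) := hp.sub hGcont
  have hpGc : Function.Antiperiodic (p - G) c := fun t => by simp [hpc t, hGc t]; abel
  obtain ⟨w, hw, hwc⟩ := exists_antiperiodic_primitive hpG hpGc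
  have hsame : ∫ t in (0 : ℝ)..2 * c, ⟪p t, (p - G) t⟫_ℝ =
      ∫ t in (0 : ℝ)..2 * c, ⟪G t, (p - G) t⟫_ℝ := by
    rw [hweak w (p - G) hw hpG hwc, integral_inner_deriv_eq_neg_of_periodic hG hw hg hpG
      hGc.periodic_two_mul hwc.periodic_two_mul]
  have hzero : ∫ t in (0 : ℝ)..2 * c, ‖(p - G) t‖ ^ 2 = 0 := by
    rw [← sub_eq_zero, ← intervalIntegral.integral_sub
      (Continuous.intervalIntegrable (by fun_prop) _ _)
      (Continuous.intervalIntegrable (by fun_prop) _ _)] at hsame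
    simpa only [← inner_sub_left, Pi.sub_apply, real_inner_self_eq_norm_sq] using hsame
  rw [sub_eq_zero.1
    (eq_zero_of_integral_norm_sq_eq_zero hpG hpGc.periodic_two_mul (by positivity) hzero)]
  exact hG t

end Antiperiodic

section PartialGradient

variable {ι E : Type*} [DecidableEq ι] [NormedAddCommGroup E] [InnerProductSpace ℝ E]
  [CompleteSpace E] {U : (ι → E) → ℝ} {X : ι → E}

/-- The gradient `∇_{u_i} U` at the configuration `X`, in the position of the `i`-th particle. -/
noncomputable def partialGradient (U : (ι → E) → ℝ) (X : ι → E) (i : ι) : E :=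
  gradient (fun y => U (Function.update X i y)) (X i)

lemma partialGradient_eq_toDual_symm [Finite ι] (hU : DifferentiableAt ℝ U X) (i : ι) :
    partialGradient U X i = (InnerProductSpace.toDual ℝ E).symm
      ((fderiv ℝ U X).comp (ContinuousLinearMap.single ℝ (fun _ : ι => E) i)) := by
  cases nonempty_fintype ι
  have hU' : HasFDerivAt U (fderiv ℝ U X) (Function.update X i (X i)) := by
    simpa using hU.hasFDerivAt
  have hsingle : ContinuousLinearMap.pi (Pi.single i (.id ℝ E)) =
      ContinuousLinearMap.single ℝ (fun _ : ι => E) i := by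
    ext y j
    obtain rfl | hj := eq_or_ne j i <;> simp [*]
  rw [← hsingle]
  exact congrArg _ (hU'.comp (X i) (hasFDerivAt_update X (X i))).fderiv

lemma inner_partialGradient [Finite ι] (hU : DifferentiableAt ℝ U X) (i : ι) (w : E) :
    ⟪partialGradient U X i, w⟫_ℝ = fderiv ℝ U X (Pi.single i w) := by
  simp [partialGradient_eq_toDual_symm hU]

lemma fderiv_eq_sum_inner_partialGradient [Fintype ι] (hU : DifferentiableAt ℝ U X)
    (Y : ι → E) :
    fderiv ℝ U X Y = ∑ i, ⟪partialGradient U X i, Y i⟫_ℝ := by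
  simp only [inner_partialGradient hU, ← map_sum, univ_sum_single]

lemma fderiv_neg_of_even {F G : Type*} [NormedAddCommGroup F] [NormedSpace ℝ F]
    [NormedAddCommGroup G] [NormedSpace ℝ G] {f : F → G} {x : F}
    (hf : ∀ᶠ y in 𝓝 x, f (-y) = f y) : fderiv ℝ f (-x) = -fderiv ℝ f x := by
  have hcomp : fderiv ℝ (fun y => f (-y)) x = -fderiv ℝ f (-x) := by
    simpa using fderiv_comp_smul (f := f) (x := x) (-1 : ℝ)
  rw [← Filter.EventuallyEq.fderiv_eq hf, hcomp, neg_neg]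

variable {Ω : Set (ι → E)} {u : ℝ → ι → E}

lemma continuous_partialGradient_comp [Fintype ι] (hΩ : IsOpen Ω) (hU : ContDiffOn ℝ 1 U Ω)
    (hu : Continuous u) (huΩ : ∀ t, u t ∈ Ω) (i : ι) :
    Continuous fun t => partialGradient U (u t) i := by
  have hfderiv : Continuous fun t => fderiv ℝ U (u t) :=
    (hU.continuousOn_fderiv_of_isOpen hΩ le_rfl).comp_continuous hu huΩ
  simp only [partialGradient_eq_toDual_symm ((hU.differentiableOn one_ne_zero).differentiableAt
    (hΩ.mem_nhds (huΩ _)))]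
  exact (LinearIsometryEquiv.continuous _).comp (hfderiv.clm_comp continuous_const)

lemma antiperiodic_partialGradient_comp [Finite ι] (hΩ : IsOpen Ω) (hU : DifferentiableOn ℝ U Ω)
    (heven : ∀ X ∈ Ω, U (-X) = U X) {c : ℝ} (hu : Function.Antiperiodic u c) (huΩ : ∀ t, u t ∈ Ω)
    (i : ι) : Function.Antiperiodic (fun t => partialGradient U (u t) i) c := fun t => by
  cases nonempty_fintype ι
  have hdiff : ∀ t, DifferentiableAt ℝ U (u t) := fun t =>
    hU.differentiableAt (hΩ.mem_nhds (huΩ t))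
  have hodd : fderiv ℝ U (-u t) = -fderiv ℝ U (u t) :=
    fderiv_neg_of_even (by filter_upwards [hΩ.mem_nhds (huΩ t)] using heven)
  simp only [partialGradient_eq_toDual_symm (hdiff _)]
  rw [hu t, hodd, ContinuousLinearMap.neg_comp, map_neg]

end PartialGradient

section PairPotential

variable {ι E : Type*}

/-- The configurations in which no two particles sit at the same point. -/
def noncollisionSet (ι E : Type*) : Set (ι → E) :=
  {X | ∀ i j, i ≠ j → X i ≠ X j}

lemma isOpen_noncollisionSet [Finite ι] [TopologicalSpace E] [T2Space E] :
    IsOpen (noncollisionSet ι E) := by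
  simp only [noncollisionSet, Set.ofPred_forall]
  exact isOpen_iInter_of_finite fun i => isOpen_iInter_of_finite fun j =>
    isOpen_iInter_of_finite fun _ => isOpen_ne_fun (continuous_apply i) (continuous_apply j)

variable [Fintype ι] [DecidableEq ι]

/-- The total potential `V(u_1, …, u_N)` of the pair interactions `V i j`. -/
noncomputable def pairPotential [AddGroup E] (V : ι → ι → E → ℝ) (X : ι → E) : ℝ :=
  (1 / 2) * ∑ i, ∑ j ∈ univ.filter (fun j => j ≠ i), V i j (X i - X j)

lemma contDiffOn_pairPotential [NormedAddCommGroup E] [NormedSpace ℝ E] {V : ι → ι → E → ℝ}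
    {k : WithTop ℕ∞}
    (hV : ∀ i j, i ≠ j → ContDiffOn ℝ k (V i j) {ξ | ξ ≠ 0}) :
    ContDiffOn ℝ k (pairPotential V) (noncollisionSet ι E) := by
  refine contDiffOn_const.mul (ContDiffOn.sum fun i _ => ContDiffOn.sum fun j hj => ?_)
  have hij : i ≠ j := (mem_filter.1 hj).2.symm
  exact (hV i j hij).comp ((contDiff_apply ℝ E i).sub (contDiff_apply ℝ E j)).contDiffOn
    fun X hX => sub_ne_zero.2 (hX i j hij)

lemma pairPotential_neg [AddCommGroup E] {V : ι → ι → E → ℝ}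
    (hV : ∀ i j, i ≠ j → ∀ ξ : E, ξ ≠ 0 → V i j ξ = V j i ξ) {X : ι → E}
    (hX : X ∈ noncollisionSet ι E) : pairPotential V (-X) = pairPotential V X := by
  have hswap : ∀ i j, i ≠ j → V i j ((-X) i - (-X) j) = V j i (X j - X i) := fun i j hij => by
    rw [Pi.neg_apply, Pi.neg_apply, neg_sub_neg, hV i j hij _ (sub_ne_zero.2 (hX j i hij.symm))]
  unfold pairPotential
  congr 1
  simp only [sum_filter]
  rw [sum_comm]
  refine sum_congr rfl fun i _ => sum_congr rfl fun j _ => ?_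
  by_cases hij : i = j
  · simp [hij]
  · rw [if_pos hij, if_pos (Ne.symm hij), hswap j i (Ne.symm hij)]

end PairPotential

section FixedEnergyFunctional

variable {ι E : Type*}

/-- The factor `∫₀¹ (h - U(u))` of the fixed-energy functional. -/
noncomputable def potentialAction (h : ℝ) (U : (ι → E) → ℝ) (u : ℝ → ι → E) : ℝ :=
  ∫ t in (0 : ℝ)..1, (h - U (u t))

variable [Fintype ι] [NormedAddCommGroup E] [NormedSpace ℝ E] {m : ι → ℝ} {h : ℝ}
  {U : (ι → E) → ℝ} {Ω : Set (ι → E)} {u v : ℝ → ι → E}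

/-- The kinetic energy `½ Σ mᵢ |q̇ᵢ(t)|²` of the motion `q` at time `t`. -/
noncomputable def kineticEnergy (m : ι → ℝ) (q : ℝ → ι → E) (t : ℝ) : ℝ :=
  (1 / 2) * ∑ i, m i * ‖deriv (fun s => q s i) t‖ ^ 2

/-- The factor `½ ∫₀¹ Σ mᵢ |u̇ᵢ|²` of the fixed-energy functional. -/
noncomputable def kineticAction (m : ι → ℝ) (u : ℝ → ι → E) : ℝ :=
  (1 / 2) * ∫ t in (0 : ℝ)..1, ∑ i, m i * ‖deriv (fun s => u s i) t‖ ^ 2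

/-- The functional `f` whose critical points are, up to a time rescaling, the `1`-periodic motions
of energy `h`. -/
noncomputable def fixedEnergyFunctional (m : ι → ℝ) (h : ℝ) (U : (ι → E) → ℝ) (u : ℝ → ι → E) :
    ℝ :=
  kineticAction m u * potentialAction h U u

/-- Criticality of `u` for `f` among loops of period `1` with antiperiod `1 / 2`, in the sense of
Gateaux derivatives along `C¹` loops `v`. -/
def IsAntiperiodicCriticalPoint (f : (ℝ → ι → E) → ℝ) (u : ℝ → ι → E) : Prop :=
  ∀ v : ℝ → ι → E, ContDiff ℝ 1 v → Function.Antiperiodic v (1 / 2) →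
    HasDerivAt (fun s : ℝ => f fun t => u t + s • v t) 0 0

lemma kineticEnergy_smul (c : ℝ) (q : ℝ → ι → E) (t : ℝ) :
    kineticEnergy (c • m) q t = c * kineticEnergy m q t := by
  simp only [kineticEnergy, Pi.smul_apply, smul_eq_mul, mul_assoc, ← mul_sum, mul_left_comm]

lemma kineticAction_eq_integral (m : ι → ℝ) (u : ℝ → ι → E) :
    kineticAction m u = ∫ t in (0 : ℝ)..1, kineticEnergy m u t :=
  (intervalIntegral.integral_const_mul _ _).symm

lemma kineticAction_smul (c : ℝ) (u : ℝ → ι → E) :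
    kineticAction (c • m) u = c * kineticAction m u := by
  simp only [kineticAction_eq_integral, kineticEnergy_smul, intervalIntegral.integral_const_mul]

lemma kineticAction_const (m : ι → ℝ) (X : ι → E) : kineticAction m (fun _ => X) = 0 := by
  simp [kineticAction]

lemma hasDerivAt_potentialAction_add_smul (hΩ : IsOpen Ω) (hU : ContDiffOn ℝ 1 U Ω)
    (hu : Continuous u) (hv : Continuous v) (huΩ : ∀ t, u t ∈ Ω) :
    HasDerivAt (fun s : ℝ => potentialAction h U fun t => u t + s • v t)
      (-∫ t in (0 : ℝ)..1, fderiv ℝ U (u t) (v t)) 0 := by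
  simpa only [potentialAction, fderiv_const_sub, neg_apply, intervalIntegral.integral_neg] using
    hasDerivAt_intervalIntegral_add_smul hΩ (contDiffOn_const.sub hU) (F := fun X => h - U X) hu hv
      huΩ 0 1

end FixedEnergyFunctional

section FixedEnergySystem

variable {ι E : Type*} [Fintype ι] [NormedAddCommGroup E] [InnerProductSpace ℝ E]
  {m : ι → ℝ} {h : ℝ} {U : (ι → E) → ℝ} {Ω : Set (ι → E)} {q u v : ℝ → ι → E}

/-- A solution `q` of the fixed-energy system (Ph) with masses `m`, energy `h` and potential `U`;
`contDiff` makes the second derivative in `newton` a genuine one. -/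
structure IsFixedEnergySolution [DecidableEq ι] [CompleteSpace E] (m : ι → ℝ) (h : ℝ)
    (U : (ι → E) → ℝ) (q : ℝ → ι → E) : Prop where
  contDiff : ContDiff ℝ 2 q
  newton : ∀ t i, m i • deriv (deriv fun s => q s i) t + partialGradient U (q t) i = 0
  energy : ∀ t, kineticEnergy m q t + U (q t) = h

section Newton

variable [DecidableEq ι] [CompleteSpace E]

lemma hasDerivAt_kineticEnergy_add_potential (hU : DifferentiableAt ℝ U (q t))
    (hq : ContDiff ℝ 2 q) : HasDerivAt (fun t => kineticEnergy m q t + U (q t))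
      (∑ i, ⟪m i • deriv (deriv fun s => q s i) t + partialGradient U (q t) i,
        deriv (fun s => q s i) t⟫_ℝ) t := by
  have hvel : ∀ i, HasDerivAt (deriv fun s => q s i) (deriv (deriv fun s => q s i) t) t := fun i =>
    ((contDiff_pi.1 hq i).differentiable_deriv_two t).hasDerivAt
  have hpos := hasDerivAt_pi.2 fun i =>
    (differentiableAt_pi.1 (hq.differentiable two_ne_zero t) i).hasDerivAt
  have hkin : HasDerivAt (kineticEnergy m q) ((1 / 2) * ∑ i, m i *
      (2 * ⟪deriv (fun s => q s i) t, deriv (deriv fun s => q s i) t⟫_ℝ)) t :=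
    (HasDerivAt.fun_sum fun i _ => (hvel i).norm_sq.const_mul (m i)).const_mul (1 / 2)
  refine (hkin.add (hU.hasFDerivAt.comp_hasDerivAt t hpos)).congr_deriv ?_
  rw [fderiv_eq_sum_inner_partialGradient hU, mul_sum, ← sum_add_distrib]
  refine sum_congr rfl fun i _ => ?_
  rw [inner_add_left, real_inner_smul_left, real_inner_comm]
  ring

/-- By Newton's equation the energy is constant; comparing means over `[0, 1]` gives its value. -/
lemma isFixedEnergySolution_of_newton (hΩ : IsOpen Ω) (hU : DifferentiableOn ℝ U Ω)
    (hu : ContDiff ℝ 2 u) (huΩ : ∀ t, u t ∈ Ω)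
    (hnewton : ∀ t i, m i • deriv (deriv fun s => u s i) t + partialGradient U (u t) i = 0)
    (hmean : kineticAction m u = potentialAction h U u) : IsFixedEnergySolution m h U u := by
  refine ⟨hu, hnewton, fun t => ?_⟩
  have hderiv : ∀ t, HasDerivAt (fun t => kineticEnergy m u t + U (u t)) 0 t := fun t => by
    simpa [hnewton t] using hasDerivAt_kineticEnergy_add_potential (m := m)
      (hU.differentiableAt (hΩ.mem_nhds (huΩ t))) hu
  have hconst : ∀ s, kineticEnergy m u s = kineticEnergy m u t + U (u t) - h + (h - U (u s)) :=
    fun s => by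
      linear_combination is_const_of_deriv_eq_zero (fun t => (hderiv t).differentiableAt)
        (fun t => (hderiv t).deriv) s t
  have hUcont : Continuous fun s => h - U (u s) :=
    continuous_const.sub (hU.continuousOn.comp_continuous hu.continuous huΩ)
  rw [kineticAction_eq_integral, funext hconst, potentialAction, intervalIntegral.integral_add
    intervalIntegrable_const (hUcont.intervalIntegrable _ _)] at hmean
  simp only [intervalIntegral.integral_const, sub_zero, one_smul] at hmean
  linarith

lemma IsFixedEnergySolution.comp_div {T : ℝ}
    (hu : IsFixedEnergySolution ((1 / T ^ 2) • m) h U u) :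
    IsFixedEnergySolution m h U fun t => u (t / T) := by
  have hvel : ∀ i, deriv (fun s => u (s / T) i) = fun t => T⁻¹ • deriv (fun s => u s i) (t / T) :=
    fun i => funext fun t => by
      simpa [div_eq_inv_mul] using deriv_comp_mul_left T⁻¹ (fun s => u s i) t
  have hacc : ∀ i t, deriv (deriv fun s => u (s / T) i) t =
      (1 / T ^ 2) • deriv (deriv fun s => u s i) (t / T) := fun i t => by
    rw [hvel, deriv_fun_const_smul_field]
    have hchain : deriv (fun t => deriv (fun s => u s i) (t / T)) t =
        T⁻¹ • deriv (deriv fun s => u s i) (t / T) := by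
      simpa [div_eq_inv_mul] using deriv_comp_mul_left T⁻¹ (deriv fun s => u s i) t
    rw [hchain, smul_smul, ← sq, inv_pow, one_div]
  refine ⟨hu.contDiff.comp (contDiff_id.div_const T), fun t i => ?_, fun t => ?_⟩
  · simpa [hacc, smul_smul, mul_comm] using hu.newton (t / T) i
  · have hkin : kineticEnergy m (fun t => u (t / T)) t =
        kineticEnergy ((1 / T ^ 2) • m) u (t / T) := by
      rw [kineticEnergy_smul]
      simp only [kineticEnergy, hvel, norm_smul, norm_inv, Real.norm_eq_abs, mul_pow, inv_pow,
        sq_abs, one_div, mul_sum]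
      exact sum_congr rfl fun i _ => by ring
    rw [hkin, hu.energy]

end Newton

section FirstVariation

lemma fderiv_weighted_sum_norm_sq (m : ι → ℝ) (x y : ι → E) :
    fderiv ℝ (fun x : ι → E => (1 / 2) * ∑ i, m i * ‖x i‖ ^ 2) x y = ∑ i, m i * ⟪x i, y i⟫_ℝ := by
  have hterm : ∀ i, HasFDerivAt (fun x : ι → E => m i * ‖x i‖ ^ 2) _ x := fun i =>
    ((hasFDerivAt_apply (𝕜 := ℝ) (F' := fun _ => E) i x).norm_sq).const_mul (m i)
  rw [((HasFDerivAt.fun_sum fun i _ => hterm i).const_mul (1 / 2 : ℝ)).fderiv]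
  simp [mul_sum, mul_left_comm (m _)]

lemma hasDerivAt_kineticAction_add_smul (hu : ContDiff ℝ 1 u) (hv : ContDiff ℝ 1 v) :
    HasDerivAt (fun s : ℝ => kineticAction m fun t => u t + s • v t)
      (∫ t in (0 : ℝ)..1, ∑ i, m i * ⟪deriv (fun r => u r i) t, deriv (fun r => v r i) t⟫_ℝ) 0 := by
  have hcomp : ∀ {w : ℝ → ι → E}, ContDiff ℝ 1 w → ∀ t i,
      HasDerivAt (fun r => w r i) (deriv (fun r => w r i) t) t := fun hw t i =>
    (differentiableAt_pi.1 (hw.differentiable one_ne_zero t) i).hasDerivAt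
  have hvel : ∀ (s t : ℝ) i, deriv (fun r => u r i + s • v r i) t =
      deriv (fun r => u r i) t + s • deriv (fun r => v r i) t := fun s t i =>
    ((hcomp hu t i).fun_add ((hcomp hv t i).fun_const_smul s)).deriv
  have hcont : ∀ {w : ℝ → ι → E}, ContDiff ℝ 1 w → Continuous fun t i => deriv (fun r => w r i) t :=
    fun hw => continuous_pi fun i => (contDiff_pi.1 hw i).continuous_deriv_one
  simpa only [kineticAction_eq_integral, kineticEnergy, hvel, Pi.add_apply, Pi.smul_apply,
    fderiv_weighted_sum_norm_sq] using
    hasDerivAt_intervalIntegral_add_smul isOpen_univ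
      (F := fun x : ι → E => (1 / 2) * ∑ i, m i * ‖x i‖ ^ 2)
      (contDiff_const.mul (ContDiff.sum fun i _ =>
        contDiff_const.mul ((contDiff_apply ℝ E i).norm_sq ℝ))).contDiffOn
      (hcont hu) (hcont hv) (fun t => Set.mem_univ _) 0 1

variable [DecidableEq ι] [CompleteSpace E]

lemma hasDerivAt_fixedEnergyFunctional_add_smul_single (hΩ : IsOpen Ω) (hU : ContDiffOn ℝ 1 U Ω)
    (hu : ContDiff ℝ 1 u) (huΩ : ∀ t, u t ∈ Ω) (i : ι) {w : ℝ → E} (hw : ContDiff ℝ 1 w) :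
    HasDerivAt
      (fun s : ℝ => fixedEnergyFunctional m h U fun t => u t + s • (Pi.single i (w t) : ι → E))
      ((m i * ∫ t in (0 : ℝ)..1, ⟪deriv (fun r => u r i) t, deriv w t⟫_ℝ) * potentialAction h U u -
        kineticAction m u * ∫ t in (0 : ℝ)..1, ⟪partialGradient U (u t) i, w t⟫_ℝ) 0 := by
  have hU_at : ∀ t, DifferentiableAt ℝ U (u t) := fun t =>
    (hU.differentiableOn one_ne_zero).differentiableAt (hΩ.mem_nhds (huΩ t))
  have hsingle : ContDiff ℝ 1 fun t => (Pi.single i (w t) : ι → E) :=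
    (contDiff_single (fun _ : ι => E) 1 i).comp hw
  have hvel : ∀ t j, deriv (fun r => (Pi.single i (w r) : ι → E) j) t =
      (Pi.single i (deriv w t) : ι → E) j := fun t j => by
    obtain rfl | hj := eq_or_ne j i <;> simp [*]
  have hkin : ∀ t, ∑ j, m j * ⟪deriv (fun r => u r j) t,
      deriv (fun r => (Pi.single i (w r) : ι → E) j) t⟫_ℝ =
        m i * ⟪deriv (fun r => u r i) t, deriv w t⟫_ℝ := fun t => by
    rw [Fintype.sum_eq_single i fun j hj => by simp [hj], hvel, Pi.single_eq_same]
  have hprod := (hasDerivAt_kineticAction_add_smul (m := m) hu hsingle).fun_mul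
    (hasDerivAt_potentialAction_add_smul (h := h) hΩ hU hu.continuous hsingle.continuous huΩ)
  simpa only [fixedEnergyFunctional, hkin, ← inner_partialGradient (hU_at _), zero_smul, add_zero,
    intervalIntegral.integral_const_mul, mul_neg, ← sub_eq_add_neg] using hprod

end FirstVariation

section CriticalPoint

variable [DecidableEq ι] [CompleteSpace E]

/-- Antiperiodic variations suffice, because `t ↦ ∇_{u_i} U(u(t))` is antiperiodic for even `U`. -/
lemma IsAntiperiodicCriticalPoint.hasDerivAt_smul_velocity
    (hcrit : IsAntiperiodicCriticalPoint (fixedEnergyFunctional m h U) u) (hΩ : IsOpen Ω)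
    (hU : ContDiffOn ℝ 1 U Ω) (heven : ∀ X ∈ Ω, U (-X) = U X) (hu : ContDiff ℝ 1 u)
    (hanti : Function.Antiperiodic u (1 / 2)) (huΩ : ∀ t, u t ∈ Ω) (hK : kineticAction m u ≠ 0)
    (i : ι) (t : ℝ) :
    HasDerivAt
      (fun t => (potentialAction h U u / kineticAction m u * m i) • deriv (fun s => u s i) t)
      (-partialGradient U (u t) i) t := by
  have hvel : Function.Antiperiodic (deriv fun s => u s i) (1 / 2) :=
    antiperiodic_deriv fun t => congrFun (hanti t) i
  refine hasDerivAt_of_forall_integral_inner_eq one_half_pos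
    ((contDiff_pi.1 hu i).continuous_deriv_one.const_smul _)
    (fun t => by rw [Pi.smul_apply, Pi.smul_apply, hvel t, smul_neg])
    (continuous_partialGradient_comp hΩ hU hu.continuous huΩ i).neg
    (fun t => congrArg Neg.neg (antiperiodic_partialGradient_comp hΩ
      (hU.differentiableOn one_ne_zero) heven hanti huΩ i t)) (fun w w' hw hw' hwanti => ?_) t
  obtain rfl : deriv w = w' := funext fun t => (hw t).deriv
  have hwC1 : ContDiff ℝ 1 w := contDiff_one_iff_deriv.2 ⟨fun t => (hw t).differentiableAt, hw'⟩
  have hsingle : ContDiff ℝ 1 fun t => (Pi.single i (w t) : ι → E) :=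
    (contDiff_single (fun _ : ι => E) 1 i).comp hwC1
  have hstat := (hcrit _ hsingle fun t => by rw [hwanti t, Pi.single_neg]).unique
    (hasDerivAt_fixedEnergyFunctional_add_smul_single hΩ hU hu huΩ i hwC1)
  simp only [mul_one_div_cancel (two_ne_zero' ℝ), Pi.smul_apply, Pi.neg_apply,
    real_inner_smul_left, inner_neg_left, intervalIntegral.integral_neg,
    intervalIntegral.integral_const_mul, neg_neg]
  field_simp
  linear_combination -hstat

lemma IsAntiperiodicCriticalPoint.isFixedEnergySolution
    (hcrit : IsAntiperiodicCriticalPoint (fixedEnergyFunctional m h U) u) (hm : ∀ i, m i ≠ 0)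
    (hΩ : IsOpen Ω) (hU : ContDiffOn ℝ 1 U Ω) (heven : ∀ X ∈ Ω, U (-X) = U X)
    (hu : ContDiff ℝ 1 u) (hanti : Function.Antiperiodic u (1 / 2)) (huΩ : ∀ t, u t ∈ Ω)
    (hf : fixedEnergyFunctional m h U u ≠ 0) :
    IsFixedEnergySolution ((potentialAction h U u / kineticAction m u) • m) h U u := by
  have hK : kineticAction m u ≠ 0 := left_ne_zero_of_mul hf
  set c := potentialAction h U u / kineticAction m u with hc
  have hcm : ∀ i, c * m i ≠ 0 := fun i =>
    mul_ne_zero (div_ne_zero (right_ne_zero_of_mul hf) hK) (hm i)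
  have hacc : ∀ i t, HasDerivAt (deriv fun s => u s i)
      ((c * m i)⁻¹ • -partialGradient U (u t) i) t := fun i t => by
    simpa only [← hc, inv_smul_smul₀ (hcm i)] using
      (hcrit.hasDerivAt_smul_velocity hΩ hU heven hu hanti huΩ hK i t).fun_const_smul (c * m i)⁻¹
  have hC2 : ContDiff ℝ 2 u := contDiff_pi.2 fun i => by
    refine (contDiff_succ_iff_deriv (n := 1)).2
      ⟨(contDiff_pi.1 hu i).differentiable one_ne_zero, by simp, contDiff_one_iff_deriv.2
        ⟨fun t => (hacc i t).differentiableAt, ?_⟩⟩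
    rw [funext fun t => (hacc i t).deriv]
    exact (continuous_partialGradient_comp hΩ hU hu.continuous huΩ i).neg.const_smul _
  refine isFixedEnergySolution_of_newton hΩ (hU.differentiableOn one_ne_zero) hC2 huΩ
    (fun t i => ?_) ?_
  · rw [(hacc i t).deriv, Pi.smul_apply, smul_eq_mul, smul_inv_smul₀ (hcm i), neg_add_cancel]
  · rw [kineticAction_smul, hc, div_mul_cancel₀ _ hK]

theorem symmetric_critical_point_gives_solution_general (hm : ∀ i, m i ≠ 0) (hΩ : IsOpen Ω)
    (hU : ContDiffOn ℝ 1 U Ω) (heven : ∀ X ∈ Ω, U (-X) = U X) (hu : ContDiff ℝ 1 u)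
    (hanti : Function.Antiperiodic u (1 / 2)) (huΩ : ∀ t, u t ∈ Ω)
    (hcrit : IsAntiperiodicCriticalPoint (fixedEnergyFunctional m h U) u)
    {T : ℝ} (hT : T ≠ 0)
    (hT_def : 1 / T ^ 2 = potentialAction h U u / kineticAction m u) :
    (∃ t₁ t₂ : ℝ, u (t₁ / T) ≠ u (t₂ / T)) ∧ (∀ t, u ((t + T) / T) = u (t / T)) ∧
      IsFixedEnergySolution m h U fun t => u (t / T) := by
  have hPK : potentialAction h U u / kineticAction m u ≠ 0 := by rw [← hT_def]; positivity
  obtain ⟨hP, hK⟩ := div_ne_zero_iff.1 hPK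
  refine ⟨?_, fun t => ?_, .comp_div ?_⟩
  · by_contra! hconst
    have hu_const : u = fun _ => u 0 := funext fun t => by
      simpa [hT] using hconst (t * T) 0
    exact hK (hu_const ▸ kineticAction_const m (u 0))
  · have hper : Function.Periodic u 1 := by simpa using hanti.periodic_two_mul
    rw [add_div, div_self hT, hper]
  · rw [hT_def]
    exact hcrit.isFixedEnergySolution hm hΩ hU heven hu hanti huΩ (mul_ne_zero hK hP)

end CriticalPoint

end FixedEnergySystem

/-- **Lemma 2.3**. Under the symmetry condition (V8'), a critical point `ū` of the
fixed-energy functional `f` on the space of antiperiodic loops with `f(ū) > 0` gives,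
after the time rescaling `q(t) = ū(t/T)`, a non-constant `T`-periodic non-collision
solution of the fixed-energy system (Ph). -/
theorem symmetric_critical_point_gives_solution
    (n N : ℕ) (hN : 2 ≤ N)
    (m : Fin N → ℝ) (hm : ∀ i, 0 < m i) (h : ℝ)
    (V : Fin N → Fin N → EuclideanSpace ℝ (Fin n) → ℝ)
    (hV_C1 : ∀ i j, i ≠ j → ContDiffOn ℝ 1 (V i j) {ξ | ξ ≠ 0})
    -- (V8')
    (hV8 : ∀ i j, i ≠ j → ∀ ξ : EuclideanSpace ℝ (Fin n), ξ ≠ 0 → V i j ξ = V j i ξ)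
    (Vtot : (Fin N → EuclideanSpace ℝ (Fin n)) → ℝ)
    (hVtot : ∀ X, Vtot X =
      (1/2) * ∑ i, ∑ j ∈ univ.filter (fun j => j ≠ i), V i j (X i - X j))
    (f : (ℝ → Fin N → EuclideanSpace ℝ (Fin n)) → ℝ)
    (hf : ∀ u : ℝ → Fin N → EuclideanSpace ℝ (Fin n), f u =
      (1/2) * (∫ t in (0:ℝ)..1, ∑ i, m i * ‖deriv (fun s => u s i) t‖ ^ 2)
        * (∫ t in (0:ℝ)..1, (h - Vtot (u t))))
    (u : ℝ → Fin N → EuclideanSpace ℝ (Fin n))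
    (hu_C2 : ContDiff ℝ 2 u)
    (hu_per : ∀ t : ℝ, u (t + 1) = u t)
    (hu_anti : ∀ t : ℝ, ∀ i, u (t + 1/2) i = -u t i)
    (hu_noncoll : ∀ t : ℝ, ∀ i j, i ≠ j → u t i ≠ u t j)
    -- `ū` is a critical point of `f` on the space of antiperiodic loops
    (hu_crit : ∀ v : ℝ → Fin N → EuclideanSpace ℝ (Fin n),
      ContDiff ℝ 1 v → (∀ t : ℝ, v (t + 1) = v t) →
      (∀ t : ℝ, ∀ i, v (t + 1/2) i = -v t i) →
      HasDerivAt (fun s : ℝ => f (fun t => u t + s • v t)) 0 0)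
    (hf_pos : 0 < f u)
    (T : ℝ) (hT : 0 < T)
    (hT_def : 1 / T ^ 2 =
      (∫ t in (0:ℝ)..1, (h - Vtot (u t)))
        / ((1/2) * ∫ t in (0:ℝ)..1, ∑ i, m i * ‖deriv (fun s => u s i) t‖ ^ 2)) :
    (∃ t₁ t₂ : ℝ, u (t₁ / T) ≠ u (t₂ / T)) ∧
    (∀ t : ℝ, u ((t + T) / T) = u (t / T)) ∧
    (∀ t : ℝ, ∀ i j, i ≠ j → u (t / T) i ≠ u (t / T) j) ∧
    (∀ t : ℝ, ∀ i,
      m i • deriv (deriv (fun s => u (s / T) i)) t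
        + gradient (fun y => Vtot (Function.update (u (t / T)) i y)) (u (t / T) i)
        = 0) ∧
    (∀ t : ℝ,
      (1/2) * ∑ i, m i * ‖deriv (fun s => u (s / T) i) t‖ ^ 2
        + Vtot (u (t / T)) = h) := by
  obtain rfl : Vtot = pairPotential V := funext hVtot
  obtain rfl : f = fixedEnergyFunctional m h (pairPotential V) := funext hf
  have hcrit : IsAntiperiodicCriticalPoint (fixedEnergyFunctional m h (pairPotential V)) u :=
    fun v hv hvanti => hu_crit v hv (by simpa using hvanti.periodic_two_mul)
      fun t => congrFun (hvanti t)
  obtain ⟨hne, hper, hsol⟩ := symmetric_critical_point_gives_solution_general (fun i => (hm i).ne')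
    isOpen_noncollisionSet (contDiffOn_pairPotential hV_C1) (fun X hX => pairPotential_neg hV8 hX)
    (hu_C2.of_le one_le_two) (fun t => funext (hu_anti t)) hu_noncoll hcrit hT.ne' hT_def
  exact ⟨hne, hper, fun t => hu_noncoll (t / T), hsol.newton, hsol.energy⟩
end

section
/- Let N ≥ 2, m_1,…,m_N > 0, h > 0, and let V_{ij} : ℝ^n \ {0} → ℝ (1 ≤ i ≠ j ≤ N) be continuously differentiable with V_{ij}(ξ) ≤ 0 for all ξ ≠ 0, and suppose there exist α > 2, A > 0, r₁ > 0 such that V_{ij}(ξ) ≤ −A|ξ|^{−α} for all 0 < |ξ| ≤ r₁. Set V(u) = (1/2) Σ_{i≠j} V_{ij}(u_i − u_j) and f(u) = (1/2)(∫₀¹ Σ m_i |u̇_i|² dt)·(∫₀¹ (h − V(u)) dt). Then for every λ ∈ ℝ there exists a constant k = k(λ) > 0 such that for every continuously differentiable, 1-periodic, antiperiodic (u_i(t+1/2) = −u_i(t)), non-collision map u : ℝ → (ℝ^n)^N with f(u) ≤ λ, one has ‖u‖ ≤ k · p(u), where ‖u‖ = (∫₀¹ Σ_{i=1}^N m_i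 |u̇_i(t)|² dt)^{1/2} and p(u) = min_{1 ≤ i ≠ j ≤ N, t ∈ [0,1]} |u_i(t) − u_j(t)|. -/
open Finset

/-!
Let `E = ‖u‖²`, `C = ∑ mᵢ⁻¹`, and let `p = |uᵢ(t₀) - uⱼ(t₀)|` be a mutual distance at some time. By
Cauchy–Schwarz the squared speed of `uᵢ - uⱼ` integrates to at most `C E`, so `uᵢ - uⱼ` is
`1/2`-Hölder with constant `√(C E)`. Hence, if `p² ≤ C E`, it has norm at most `2p` on a subinterval
of `[0, 1]` of length `p² / (C E)`. If moreover `2p ≤ r₁`, the strong force condition makes `h - V`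
at least `(A / 2) (2p)^(-α)` there, and `E` cancels from the resulting lower bound for the action:
`A (2p)^(2 - α) ≤ 16 C f(u)`. As `α > 2`, a bound on the action keeps `p` away from `0`.

So either `C E ≤ p²` or `p` is bounded below; in the second case `h E ≤ 2 f(u)`, which holds because
`V ≤ 0`, bounds `E` by a multiple of `p²` as well.
-/

open MeasureTheory

section Interval

variable {F : Type*} [NormedAddCommGroup F] [NormedSpace ℝ F] {w : ℝ → F} {g G : ℝ → ℝ} {a b : ℝ}

lemma norm_sub_sq_le_sub_mul_integral (hab : a ≤ b)
    (hwc : ContinuousOn w (Set.Icc a b)) (hwd : DifferentiableOn ℝ w (Set.Ioo a b))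
    (hg : IntervalIntegrable g volume a b) (hwg : ∀ t ∈ Set.Ioo a b, ‖deriv w t‖ ^ 2 ≤ g t) :
    ‖w b - w a‖ ^ 2 ≤ (b - a) * ∫ t in a..b, g t := by
  rcases hab.eq_or_lt with rfl | hab'
  · simp
  rcases (norm_nonneg (w b - w a)).eq_or_lt with hD | hD
  · rw [← hD, zero_pow two_ne_zero]
    refine mul_nonneg (sub_nonneg.2 hab) ?_
    simpa using intervalIntegral.integral_mono_on_of_le_Ioo hab
      (intervalIntegrable_const (c := (0 : ℝ))) hg fun t ht => (sq_nonneg _).trans (hwg t ht)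
  -- The mean speed `c` is the optimal weight in `2 c ‖w'‖ ≤ c² + ‖w'‖²`.
  obtain ⟨c, hc, hcD⟩ : ∃ c > 0, ‖w b - w a‖ = c * (b - a) :=
    ⟨_, div_pos hD (sub_pos.2 hab'), (div_mul_cancel₀ _ (sub_pos.2 hab').ne').symm⟩
  have hspeed : ∀ t ∈ Set.Ioo a b, ‖deriv w t‖ ≤ (2 * c)⁻¹ * (c ^ 2 + g t) := fun t ht => by
    rw [le_inv_mul_iff₀ (by positivity)]
    exact (two_mul_le_add_sq c _).trans (add_le_add_right (hwg t ht) _)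
  have hdisp : ‖w b - w a‖ ≤ (2 * c)⁻¹ * (c ^ 2 * (b - a) + ∫ t in a..b, g t) := by
    refine (norm_sub_le_integral_of_norm_deriv_le_of_le hab hwc hwd (.of_forall hspeed)
      ((intervalIntegrable_const.add hg).const_mul _)).trans_eq ?_
    rw [intervalIntegral.integral_const_mul, intervalIntegral.integral_add
      intervalIntegrable_const hg, intervalIntegral.integral_const, smul_eq_mul, mul_comm (b - a)]
  have hmean : c ^ 2 * (b - a) ≤ ∫ t in a..b, g t := by
    rw [le_inv_mul_iff₀ (by positivity), hcD] at hdisp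
    linarith
  calc ‖w b - w a‖ ^ 2 = (b - a) * (c ^ 2 * (b - a)) := by rw [hcD]; ring
    _ ≤ (b - a) * ∫ t in a..b, g t := mul_le_mul_of_nonneg_left hmean (sub_nonneg.2 hab)

lemma norm_sub_sq_le_abs_sub_mul_integral
    (hwc : ContinuousOn w (Set.Icc a b)) (hwd : DifferentiableOn ℝ w (Set.Ioo a b))
    (hg : IntervalIntegrable g volume a b) (hwg : ∀ t ∈ Set.Ioo a b, ‖deriv w t‖ ^ 2 ≤ g t)
    {s t : ℝ} (hs : s ∈ Set.Icc a b) (ht : t ∈ Set.Icc a b) :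
    ‖w t - w s‖ ^ 2 ≤ |t - s| * ∫ x in a..b, g x := by
  wlog hst : s ≤ t generalizing s t
  · rw [norm_sub_rev, abs_sub_comm]
    exact this ht hs (le_of_not_ge hst)
  have hIoo : Set.Ioo s t ⊆ Set.Ioo a b := Set.Ioo_subset_Ioo hs.1 ht.2
  have hg_st : IntervalIntegrable g volume s t :=
    hg.mono_set (Set.uIcc_subset_uIcc (Set.Icc_subset_uIcc hs) (Set.Icc_subset_uIcc ht))
  have hg_nonneg : 0 ≤ᵐ[volume.restrict (Set.Ioc a b)] g := by
    rw [← restrict_Ioo_eq_restrict_Ioc]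
    exact ae_restrict_of_forall_mem measurableSet_Ioo
      fun x hx => (sq_nonneg _).trans (hwg x hx)
  calc ‖w t - w s‖ ^ 2
      ≤ (t - s) * ∫ x in s..t, g x :=
        norm_sub_sq_le_sub_mul_integral hst (hwc.mono (Set.Icc_subset_Icc hs.1 ht.2))
          (hwd.mono hIoo) hg_st fun x hx => hwg x (hIoo hx)
    _ ≤ |t - s| * ∫ x in a..b, g x := by
        rw [abs_of_nonneg (sub_nonneg.2 hst)]
        exact mul_le_mul_of_nonneg_left
          (intervalIntegral.integral_mono_interval hs.1 hst ht.2 hg_nonneg hg)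
          (sub_nonneg.2 hst)

lemma exists_Icc_norm_le_two_mul
    (hwc : ContinuousOn w (Set.Icc a b)) (hwd : DifferentiableOn ℝ w (Set.Ioo a b))
    (hg : IntervalIntegrable g volume a b) (hwg : ∀ t ∈ Set.Ioo a b, ‖deriv w t‖ ^ 2 ≤ g t)
    {t₀ : ℝ} (ht₀ : t₀ ∈ Set.Icc a b) (hK : 0 < ∫ t in a..b, g t)
    (hle : ‖w t₀‖ ^ 2 ≤ (b - a) * ∫ t in a..b, g t) :
    ∃ c d : ℝ, a ≤ c ∧ d ≤ b ∧ d - c = ‖w t₀‖ ^ 2 / (∫ t in a..b, g t) ∧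
      ∀ t ∈ Set.Icc c d, ‖w t‖ ≤ 2 * ‖w t₀‖ := by
  set K := ∫ t in a..b, g t
  set δ := ‖w t₀‖ ^ 2 / K
  have hδ : 0 ≤ δ := by positivity
  have hδ_le : δ ≤ b - a := (div_le_iff₀ hK).2 hle
  set c := max a (t₀ - δ)
  have hac : a ≤ c := le_max_left _ _
  have hcd : c + δ ≤ b :=
    le_sub_iff_add_le.1 (max_le (by linarith) (by linarith [ht₀.2]))
  have hct₀ : c ≤ t₀ := max_le ht₀.1 (by linarith)
  have ht₀d : t₀ - δ ≤ c := le_max_right _ _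
  refine ⟨c, c + δ, hac, hcd, by ring, fun t ht => ?_⟩
  have hdist : |t - t₀| ≤ δ := abs_le.2 ⟨by linarith [ht.1], by linarith [ht.2]⟩
  have hmove : ‖w t - w t₀‖ ≤ ‖w t₀‖ := by
    refine (sq_le_sq₀ (norm_nonneg _) (norm_nonneg _)).1 ?_
    calc ‖w t - w t₀‖ ^ 2 ≤ |t - t₀| * K :=
          norm_sub_sq_le_abs_sub_mul_integral hwc hwd hg hwg ht₀ (Set.Icc_subset_Icc hac hcd ht)
      _ ≤ δ * K := by gcongr
      _ = ‖w t₀‖ ^ 2 := div_mul_cancel₀ _ hK.ne'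
  linarith [norm_le_norm_add_norm_sub' (w t) (w t₀)]

lemma sub_mul_le_integral_of_le_on_subinterval (hG : IntervalIntegrable G volume a b)
    (hG0 : ∀ t ∈ Set.Icc a b, 0 ≤ G t) {c d y : ℝ} (hac : a ≤ c) (hcd : c ≤ d) (hdb : d ≤ b)
    (hy : ∀ t ∈ Set.Icc c d, y ≤ G t) :
    (d - c) * y ≤ ∫ t in a..b, G t := by
  have hG_cd : IntervalIntegrable G volume c d := by
    refine hG.mono_set ?_
    rw [Set.uIcc_of_le hcd]
    exact (Set.Icc_subset_Icc hac hdb).trans Set.Icc_subset_uIcc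
  calc (d - c) * y = ∫ _ in c..d, y := by rw [intervalIntegral.integral_const, smul_eq_mul]
    _ ≤ ∫ t in c..d, G t :=
        intervalIntegral.integral_mono_on hcd intervalIntegrable_const hG_cd hy
    _ ≤ ∫ t in a..b, G t :=
        intervalIntegral.integral_mono_interval hac hcd hdb
          (ae_restrict_of_forall_mem measurableSet_Ioc fun t ht => hG0 t ⟨ht.1.le, ht.2⟩) hG

lemma mul_rpow_two_sub_le_integral_mul_integral
    (hwc : ContinuousOn w (Set.Icc a b)) (hwd : DifferentiableOn ℝ w (Set.Ioo a b))
    (hw0 : ∀ t ∈ Set.Icc a b, w t ≠ 0) (hg : IntervalIntegrable g volume a b)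
    (hwg : ∀ t ∈ Set.Ioo a b, ‖deriv w t‖ ^ 2 ≤ g t)
    (hG : IntervalIntegrable G volume a b) (hG0 : ∀ t ∈ Set.Icc a b, 0 ≤ G t)
    {B r α : ℝ} (hB : 0 ≤ B) (hα : 0 ≤ α)
    (hGw : ∀ t ∈ Set.Icc a b, ‖w t‖ ≤ r → B * ‖w t‖ ^ (-α) ≤ G t)
    {t₀ : ℝ} (ht₀ : t₀ ∈ Set.Icc a b) (hr : 2 * ‖w t₀‖ ≤ r)
    (hle : ‖w t₀‖ ^ 2 ≤ (b - a) * ∫ t in a..b, g t) :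
    B * (2 * ‖w t₀‖) ^ (2 - α) ≤ 4 * (∫ t in a..b, g t) * ∫ t in a..b, G t := by
  have hp : 0 < ‖w t₀‖ := norm_pos_iff.2 (hw0 t₀ ht₀)
  have hK : 0 < ∫ t in a..b, g t :=
    pos_of_mul_pos_right ((pow_pos hp 2).trans_le hle) (sub_nonneg.2 (ht₀.1.trans ht₀.2))
  obtain ⟨c, d, hac, hdb, hdc, hnear⟩ := exists_Icc_norm_le_two_mul hwc hwd hg hwg ht₀ hK hle
  set K := ∫ t in a..b, g t
  set p := ‖w t₀‖
  have hcd : c ≤ d := sub_nonneg.1 (hdc ▸ by positivity)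
  have hlow : ∀ t ∈ Set.Icc c d, B * (2 * p) ^ (-α) ≤ G t := fun t ht => by
    have ht' : t ∈ Set.Icc a b := Set.Icc_subset_Icc hac hdb ht
    refine le_trans ?_ (hGw t ht' ((hnear t ht).trans hr))
    exact mul_le_mul_of_nonneg_left (Real.rpow_le_rpow_of_nonpos
      (norm_pos_iff.2 (hw0 t ht')) (hnear t ht) (neg_nonpos.2 hα)) hB
  have hsplit : (2 * p) ^ (2 - α) = (2 * p) ^ 2 * (2 * p) ^ (-α) := by
    rw [sub_eq_add_neg, Real.rpow_add (by positivity), Real.rpow_two]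
  calc B * (2 * p) ^ (2 - α) = 4 * K * ((d - c) * (B * (2 * p) ^ (-α))) := by
        rw [hdc, hsplit]
        field_simp
        ring
    _ ≤ 4 * K * ∫ t in a..b, G t := by
        gcongr
        exact sub_mul_le_integral_of_le_on_subinterval hG hG0 hac hcd hdb hlow

end Interval

lemma exists_pos_forall_le_of_rpow_le {β : ℝ} (hβ : β < 0) (M : ℝ) :
    ∃ q > 0, ∀ x > 0, x ^ β ≤ M → q ≤ x := by
  have hM : 0 < max M 1 := lt_max_of_lt_right one_pos
  exact ⟨max M 1 ^ β⁻¹, by positivity, fun x hx hxM =>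
    (Real.rpow_inv_le_iff_of_neg hM hx hβ).2 (hxM.trans (le_max_left _ _))⟩

lemma norm_sub_sq_le_sum_inv_mul_sum {ι F : Type*} [Fintype ι] [SeminormedAddCommGroup F]
    {m : ι → ℝ} (hm : ∀ i, 0 < m i) (x : ι → F) {i j : ι} (hij : i ≠ j) :
    ‖x i - x j‖ ^ 2 ≤ (∑ k, (m k)⁻¹) * ∑ k, m k * ‖x k‖ ^ 2 := by
  calc ‖x i - x j‖ ^ 2 ≤ (‖x i‖ + ‖x j‖) ^ 2 := by gcongr; exact norm_sub_le _ _
    _ ≤ (∑ k, ‖x k‖) ^ 2 := by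
        gcongr
        exact add_le_sum (fun k _ => norm_nonneg (x k)) (mem_univ i) (mem_univ j) hij
    _ ≤ (∑ k, (m k)⁻¹) * ∑ k, m k * ‖x k‖ ^ 2 :=
        sum_sq_le_sum_mul_sum_of_sq_le_mul _ (fun k _ => inv_nonneg.2 (hm k).le)
          (fun k _ => mul_nonneg (hm k).le (sq_nonneg _))
          fun k _ => (inv_mul_cancel_left₀ (hm k).ne' _).ge

section MutualDistances

variable {ι F : Type*} [NormedAddCommGroup F]

/-- The values `|uᵢ(t) - uⱼ(t)|` with `i ≠ j` and `t ∈ [0, 1]`, whose infimum is `p(u)`. -/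
def mutualDistances (u : ℝ → ι → F) : Set ℝ :=
  {d | ∃ i j, i ≠ j ∧ ∃ t ∈ Set.Icc (0 : ℝ) 1, d = ‖u t i - u t j‖}

variable [Finite ι] {u : ℝ → ι → F}

lemma isCompact_mutualDistances (hu : ContinuousOn u (Set.Icc 0 1)) :
    IsCompact (mutualDistances u) := by
  have hunion : mutualDistances u = ⋃ q ∈ {q : ι × ι | q.1 ≠ q.2},
      (fun t => ‖u t q.1 - u t q.2‖) '' Set.Icc (0 : ℝ) 1 := by
    ext d
    simp [mutualDistances, eq_comm (a := d)]
  rw [hunion]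
  exact (Set.toFinite _).isCompact_biUnion fun q _ => isCompact_Icc.image_of_continuousOn
    ((continuousOn_pi.1 hu q.1).sub (continuousOn_pi.1 hu q.2)).norm

lemma sInf_mutualDistances_mem [Nontrivial ι] (hu : ContinuousOn u (Set.Icc 0 1)) :
    sInf (mutualDistances u) ∈ mutualDistances u := by
  obtain ⟨i, j, hij⟩ := exists_pair_ne ι
  exact (isCompact_mutualDistances hu).sInf_mem
    ⟨_, i, j, hij, 0, Set.left_mem_Icc.2 zero_le_one, rfl⟩

end MutualDistances

section Potentials

variable {ι F : Type*} [NormedAddCommGroup F] {V : ι → ι → F → ℝ} {X : ι → F} {α A r : ℝ} {i j : ι}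

/-- Pair potentials that are continuous off the origin, attractive (nonpositive), and satisfy the
strong force condition `V_{ij}(ξ) ≤ -A |ξ|^(-α)` on the punctured ball of radius `r`. -/
structure IsStrongForce (V : ι → ι → F → ℝ) (α A r : ℝ) : Prop where
  continuousOn : ∀ i j, i ≠ j → ContinuousOn (V i j) {ξ | ξ ≠ 0}
  nonpos : ∀ i j, i ≠ j → ∀ ξ, ξ ≠ 0 → V i j ξ ≤ 0
  le_neg_rpow : ∀ i j, i ≠ j → ∀ ξ, 0 < ‖ξ‖ → ‖ξ‖ ≤ r → V i j ξ ≤ -A * ‖ξ‖ ^ (-α)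

lemma IsStrongForce.nonpos_of_injective (hV : IsStrongForce V α A r) (hX : Function.Injective X)
    (i j : ι) (hij : i ≠ j) : V i j (X i - X j) ≤ 0 :=
  hV.nonpos i j hij _ (sub_ne_zero.2 (hX.ne hij))

variable [Fintype ι] [DecidableEq ι]

/-- The potential `V(X) = (1/2) ∑_{i ≠ j} V_{ij}(Xᵢ - Xⱼ)` of a configuration `X`. -/
noncomputable def totalPotential (V : ι → ι → F → ℝ) (X : ι → F) : ℝ :=
  1 / 2 * ∑ i, ∑ j ∈ univ.filter (fun j => j ≠ i), V i j (X i - X j)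

lemma continuousOn_totalPotential (hV : ∀ i j, i ≠ j → ContinuousOn (V i j) {ξ | ξ ≠ 0}) :
    ContinuousOn (totalPotential V) {X | Function.Injective X} := by
  refine continuousOn_const.mul
    (continuousOn_finsetSum _ fun i _ => continuousOn_finsetSum _ fun j hj => ?_)
  have hij : i ≠ j := (mem_filter.1 hj).2.symm
  exact (hV i j hij).comp (by fun_prop) fun X hX => sub_ne_zero.2 (hX.ne hij)

lemma totalPotential_le_half_mul (hV : ∀ i j, i ≠ j → V i j (X i - X j) ≤ 0) (hij : i ≠ j) :
    totalPotential V X ≤ 1 / 2 * V i j (X i - X j) := by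
  have hrow : ∀ a, 0 ≤ ∑ b ∈ univ.filter (fun b => b ≠ a), -V a b (X a - X b) :=
    fun a => sum_nonneg fun b hb => neg_nonneg.2 (hV a b (mem_filter.1 hb).2.symm)
  have hsum : -V i j (X i - X j) ≤
      ∑ a, ∑ b ∈ univ.filter (fun b => b ≠ a), -V a b (X a - X b) :=
    (single_le_sum (f := fun b => -V i b (X i - X b))
      (fun b hb => neg_nonneg.2 (hV i b (mem_filter.1 hb).2.symm))
      (mem_filter.2 ⟨mem_univ j, hij.symm⟩)).trans
      (single_le_sum (fun a _ => hrow a) (mem_univ i))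
  simp only [sum_neg_distrib] at hsum
  rw [totalPotential]
  linarith

lemma IsStrongForce.totalPotential_nonpos (hV : IsStrongForce V α A r) (hX : Function.Injective X) :
    totalPotential V X ≤ 0 :=
  mul_nonpos_of_nonneg_of_nonpos one_half_pos.le <| sum_nonpos fun i _ => sum_nonpos fun j hj =>
    hV.nonpos_of_injective hX i j (mem_filter.1 hj).2.symm

lemma IsStrongForce.half_mul_rpow_le_neg_totalPotential (hV : IsStrongForce V α A r)
    (hX : Function.Injective X) (hij : i ≠ j) (hr : ‖X i - X j‖ ≤ r) :
    A / 2 * ‖X i - X j‖ ^ (-α) ≤ -totalPotential V X := by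
  have hpair := totalPotential_le_half_mul (hV.nonpos_of_injective hX) hij
  have hforce := hV.le_neg_rpow i j hij _ (norm_pos_iff.2 (sub_ne_zero.2 (hX.ne hij))) hr
  linarith

end Potentials

section Motions

variable {ι F : Type*} [Fintype ι] [NormedAddCommGroup F] [NormedSpace ℝ F]

/-- The integrand `∑ mᵢ |u̇ᵢ(t)|²` of `‖u‖²`. -/
noncomputable def kineticDensity (m : ι → ℝ) (u : ℝ → ι → F) (t : ℝ) : ℝ :=
  ∑ i, m i * ‖deriv (fun s => u s i) t‖ ^ 2

/-- The squared norm `‖u‖²`, i.e. twice the kinetic energy integrated over one period. -/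
noncomputable def kineticIntegral (m : ι → ℝ) (u : ℝ → ι → F) : ℝ :=
  ∫ t in (0 : ℝ)..1, kineticDensity m u t

/-- The fixed-energy action functional `f` at energy `h`, for a potential `U` on configurations. -/
noncomputable def fixedEnergyAction (m : ι → ℝ) (h : ℝ) (U : (ι → F) → ℝ) (u : ℝ → ι → F) : ℝ :=
  1 / 2 * kineticIntegral m u * ∫ t in (0 : ℝ)..1, (h - U (u t))

/-- Collision-free motions of finite kinetic integral over `[0, 1]`; non-collision at time `t` is
encoded as injectivity of the configuration `u t`. -/
structure IsCollisionFreeMotion (m : ι → ℝ) (u : ℝ → ι → F) : Prop where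
  continuousOn : ContinuousOn u (Set.Icc 0 1)
  differentiableOn : DifferentiableOn ℝ u (Set.Ioo 0 1)
  intervalIntegrable_kineticDensity : IntervalIntegrable (kineticDensity m u) volume 0 1
  injective : ∀ t ∈ Set.Icc (0 : ℝ) 1, Function.Injective (u t)

variable {m : ι → ℝ} {u : ℝ → ι → F} {V : ι → ι → F → ℝ} {U : (ι → F) → ℝ}
  {h α A r : ℝ} {i j : ι}

lemma kineticIntegral_nonneg (hm : ∀ i, 0 ≤ m i) (u : ℝ → ι → F) : 0 ≤ kineticIntegral m u :=
  intervalIntegral.integral_nonneg zero_le_one fun _ _ =>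
    sum_nonneg fun i _ => mul_nonneg (hm i) (sq_nonneg _)

lemma continuous_kineticDensity (m : ι → ℝ) (hu : ContDiff ℝ 1 u) :
    Continuous (kineticDensity m u) :=
  continuous_finsetSum _ fun i _ =>
    continuous_const.mul (((contDiff_pi.1 hu i).continuous_deriv le_rfl).norm.pow 2)

lemma isCollisionFreeMotion_of_contDiff (hu : ContDiff ℝ 1 u)
    (hinj : ∀ t ∈ Set.Icc (0 : ℝ) 1, Function.Injective (u t)) : IsCollisionFreeMotion m u where
  continuousOn := hu.continuous.continuousOn
  differentiableOn := (hu.differentiable one_ne_zero).differentiableOn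
  intervalIntegrable_kineticDensity := (continuous_kineticDensity m hu).intervalIntegrable 0 1
  injective := hinj

lemma IsCollisionFreeMotion.norm_deriv_sub_sq_le (hu : IsCollisionFreeMotion m u)
    (hm : ∀ i, 0 < m i) (hij : i ≠ j) {t : ℝ} (ht : t ∈ Set.Ioo 0 1) :
    ‖deriv (fun s => u s i - u s j) t‖ ^ 2 ≤ (∑ k, (m k)⁻¹) * kineticDensity m u t := by
  have hd := differentiableAt_pi.1 (hu.differentiableOn.differentiableAt (isOpen_Ioo.mem_nhds ht))
  rw [deriv_fun_sub (hd i) (hd j)]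
  exact norm_sub_sq_le_sum_inv_mul_sum hm (fun k => deriv (fun s => u s k) t) hij

lemma mul_kineticIntegral_le_two_mul_fixedEnergyAction (h : ℝ) (hm : ∀ i, 0 ≤ m i)
    (hU : IntervalIntegrable (fun t => U (u t)) volume 0 1)
    (hU0 : ∀ t ∈ Set.Icc 0 1, U (u t) ≤ 0) :
    h * kineticIntegral m u ≤ 2 * fixedEnergyAction m h U u := by
  have hint : h ≤ ∫ t in (0 : ℝ)..1, (h - U (u t)) := by
    simpa using intervalIntegral.integral_mono_on zero_le_one intervalIntegrable_const
      (intervalIntegrable_const.sub hU) fun t ht => (le_sub_self_iff h).2 (hU0 t ht)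
  calc h * kineticIntegral m u
      ≤ (∫ t in (0 : ℝ)..1, (h - U (u t))) * kineticIntegral m u :=
        mul_le_mul_of_nonneg_right hint (kineticIntegral_nonneg hm u)
    _ = 2 * fixedEnergyAction m h U u := by rw [fixedEnergyAction]; ring

variable [DecidableEq ι]

namespace IsStrongForce

lemma intervalIntegrable_totalPotential (hV : IsStrongForce V α A r)
    (hu : IsCollisionFreeMotion m u) :
    IntervalIntegrable (fun t => totalPotential V (u t)) volume 0 1 := by
  refine ContinuousOn.intervalIntegrable ?_
  rw [Set.uIcc_of_le zero_le_one]
  exact (continuousOn_totalPotential hV.continuousOn).comp hu.continuousOn hu.injective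

lemma mul_rpow_two_sub_le_fixedEnergyAction (hV : IsStrongForce V α A r)
    (hu : IsCollisionFreeMotion m u) (hm : ∀ i, 0 < m i) (hh : 0 ≤ h) (hα : 0 ≤ α) (hA : 0 ≤ A)
    (hij : i ≠ j) {t₀ : ℝ} (ht₀ : t₀ ∈ Set.Icc 0 1) (hr : 2 * ‖u t₀ i - u t₀ j‖ ≤ r)
    (hle : ‖u t₀ i - u t₀ j‖ ^ 2 ≤ (∑ k, (m k)⁻¹) * kineticIntegral m u) :
    A * (2 * ‖u t₀ i - u t₀ j‖) ^ (2 - α) ≤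
      16 * (∑ k, (m k)⁻¹) * fixedEnergyAction m h (totalPotential V) u := by
  have hUneg : ∀ t ∈ Set.Icc (0 : ℝ) 1, totalPotential V (u t) ≤ 0 :=
    fun t ht => hV.totalPotential_nonpos (hu.injective t ht)
  have hkey := mul_rpow_two_sub_le_integral_mul_integral (w := fun t => u t i - u t j)
    (g := fun t => (∑ k, (m k)⁻¹) * kineticDensity m u t)
    (G := fun t => h - totalPotential V (u t)) (B := A / 2) (r := r)
    ((continuousOn_pi.1 hu.continuousOn i).sub (continuousOn_pi.1 hu.continuousOn j))
    ((differentiableOn_pi.1 hu.differentiableOn i).sub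
      (differentiableOn_pi.1 hu.differentiableOn j))
    (fun t ht => sub_ne_zero.2 ((hu.injective t ht).ne hij))
    (hu.intervalIntegrable_kineticDensity.const_mul _)
    (fun t ht => hu.norm_deriv_sub_sq_le hm hij ht)
    (intervalIntegrable_const.sub (hV.intervalIntegrable_totalPotential hu))
    (fun t ht => sub_nonneg.2 ((hUneg t ht).trans hh)) (by positivity) hα
    (fun t ht htr => by
      linarith [hV.half_mul_rpow_le_neg_totalPotential (hu.injective t ht) hij htr])
    ht₀ hr (by rwa [sub_zero, one_mul, intervalIntegral.integral_const_mul])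
  rw [intervalIntegral.integral_const_mul, ← kineticIntegral] at hkey
  rw [fixedEnergyAction]
  linarith

lemma exists_pos_le_norm_sub_of_fixedEnergyAction_le (hV : IsStrongForce V α A r)
    (hm : ∀ i, 0 < m i) (hh : 0 ≤ h) (hα : 2 < α) (hA : 0 < A) (hr : 0 < r) (lam : ℝ) :
    ∃ q > 0, ∀ u : ℝ → ι → F, IsCollisionFreeMotion m u →
      fixedEnergyAction m h (totalPotential V) u ≤ lam → ∀ i j, i ≠ j → ∀ t ∈ Set.Icc (0 : ℝ) 1,
      ‖u t i - u t j‖ ^ 2 ≤ (∑ k, (m k)⁻¹) * kineticIntegral m u → q ≤ ‖u t i - u t j‖ := by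
  obtain ⟨q, hq, hqM⟩ := exists_pos_forall_le_of_rpow_le (sub_neg.2 hα)
    (16 * (∑ k, (m k)⁻¹) * lam / A)
  refine ⟨min r q / 2, half_pos (lt_min hr hq), fun u hu hlam i j hij t ht hle => ?_⟩
  suffices min r q ≤ 2 * ‖u t i - u t j‖ by linarith
  rcases le_or_gt r (2 * ‖u t i - u t j‖) with hfar | hnear
  · exact (min_le_left r q).trans hfar
  have hp : 0 < ‖u t i - u t j‖ := norm_pos_iff.2 (sub_ne_zero.2 ((hu.injective t ht).ne hij))
  have hC : 0 ≤ ∑ k, (m k)⁻¹ := sum_nonneg fun k _ => inv_nonneg.2 (hm k).le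
  refine (min_le_right r q).trans (hqM _ (by positivity) ?_)
  rw [le_div_iff₀' hA]
  exact (hV.mul_rpow_two_sub_le_fixedEnergyAction hu hm hh (by linarith) hA.le hij ht hnear.le
    hle).trans (by gcongr)

end IsStrongForce

theorem norm_controlled_by_min_distance_general [Nontrivial ι] (hm : ∀ i, 0 < m i) (hh : 0 < h)
    (hα : 2 < α) (hA : 0 < A) (hr : 0 < r) (hV : IsStrongForce V α A r) (lam : ℝ) :
    ∃ k > 0, ∀ u : ℝ → ι → F, IsCollisionFreeMotion m u →
      fixedEnergyAction m h (totalPotential V) u ≤ lam →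
      √(kineticIntegral m u) ≤ k * sInf (mutualDistances u) := by
  obtain ⟨q, hq, hqle⟩ :=
    hV.exists_pos_le_norm_sub_of_fixedEnergyAction_le hm hh.le hα hA hr lam
  set C := ∑ k, (m k)⁻¹
  have hC : 0 < C := sum_pos (fun k _ => inv_pos.2 (hm k)) univ_nonempty
  refine ⟨√(C⁻¹ + 2 * |lam| / h / q ^ 2), by positivity, fun u hu hlam => ?_⟩
  obtain ⟨i, j, hij, t, ht, hp⟩ := sInf_mutualDistances_mem hu.continuousOn
  rw [hp, Real.sqrt_le_left (by positivity), mul_pow, Real.sq_sqrt (by positivity), add_mul]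
  set p := ‖u t i - u t j‖
  have hfirst : 0 ≤ C⁻¹ * p ^ 2 := by positivity
  have hsecond : 0 ≤ 2 * |lam| / h / q ^ 2 * p ^ 2 := by positivity
  rcases le_total (C * kineticIntegral m u) (p ^ 2) with hsmall | hlarge
  · linarith [(le_inv_mul_iff₀ hC).2 hsmall]
  have henergy : h * kineticIntegral m u ≤ 2 * |lam| := by
    linarith [mul_kineticIntegral_le_two_mul_fixedEnergyAction h (fun i => (hm i).le)
      (hV.intervalIntegrable_totalPotential hu)
      fun t ht => hV.totalPotential_nonpos (hu.injective t ht), le_abs_self lam]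
  have hqp : q ≤ p := hqle u hu hlam i j hij t ht hlarge
  calc kineticIntegral m u ≤ 2 * |lam| / h := (le_div_iff₀' hh).2 henergy
    _ = 2 * |lam| / h / q ^ 2 * q ^ 2 := by field_simp
    _ ≤ 2 * |lam| / h / q ^ 2 * p ^ 2 := by gcongr
    _ ≤ _ := le_add_of_nonneg_left hfirst

end Motions

/-- **Lemma 3.2**: on each sublevel set `{f ≤ λ}` of the fixed-energy functional, the
norm `‖u‖` is controlled by a uniform multiple of the minimal mutual distance `p(u)`. -/
theorem norm_controlled_by_min_distance
    (n N : ℕ) (hN : 2 ≤ N)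
    (m : Fin N → ℝ) (hm : ∀ i, 0 < m i)
    (h : ℝ) (hh : 0 < h)
    (V : Fin N → Fin N → EuclideanSpace ℝ (Fin n) → ℝ)
    (hV_C1 : ∀ i j, i ≠ j → ContDiffOn ℝ 1 (V i j) {ξ | ξ ≠ 0})
    (hV_nonpos : ∀ i j, i ≠ j → ∀ ξ : EuclideanSpace ℝ (Fin n), ξ ≠ 0 → V i j ξ ≤ 0)
    (α : ℝ) (hα : 2 < α) (A : ℝ) (hA : 0 < A) (r₁ : ℝ) (hr₁ : 0 < r₁)
    (hV_sf : ∀ i j, i ≠ j → ∀ ξ : EuclideanSpace ℝ (Fin n), 0 < ‖ξ‖ → ‖ξ‖ ≤ r₁ →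
      V i j ξ ≤ -A * ‖ξ‖ ^ (-α))
    (Vtot : (Fin N → EuclideanSpace ℝ (Fin n)) → ℝ)
    (hVtot : ∀ X, Vtot X =
      (1/2) * ∑ i, ∑ j ∈ univ.filter (fun j => j ≠ i), V i j (X i - X j))
    (f : (ℝ → Fin N → EuclideanSpace ℝ (Fin n)) → ℝ)
    (hf : ∀ w : ℝ → Fin N → EuclideanSpace ℝ (Fin n), f w =
      (1/2) * (∫ t in (0:ℝ)..1, ∑ i, m i * ‖deriv (fun s => w s i) t‖ ^ 2)
        * (∫ t in (0:ℝ)..1, (h - Vtot (w t))))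
    (lam : ℝ) :
    ∃ k > (0:ℝ), ∀ u : ℝ → Fin N → EuclideanSpace ℝ (Fin n),
      ContDiff ℝ 1 u →
      (∀ t : ℝ, u (t + 1) = u t) →
      (∀ t : ℝ, ∀ i, u (t + 1/2) i = -u t i) →
      (∀ t : ℝ, ∀ i j, i ≠ j → u t i ≠ u t j) →
      f u ≤ lam →
      Real.sqrt (∫ t in (0:ℝ)..1, ∑ i, m i * ‖deriv (fun s => u s i) t‖ ^ 2)
        ≤ k * sInf {d : ℝ | ∃ i j, i ≠ j ∧ ∃ t ∈ Set.Icc (0:ℝ) 1,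
            d = ‖u t i - u t j‖} := by
  have : Nontrivial (Fin N) := Fin.nontrivial_iff_two_le.2 hN
  obtain rfl : Vtot = totalPotential V := funext hVtot
  obtain ⟨k, hk, hbound⟩ := norm_controlled_by_min_distance_general hm hh hα hA hr₁
    ⟨fun i j hij => (hV_C1 i j hij).continuousOn, hV_nonpos, hV_sf⟩ lam
  exact ⟨k, hk, fun u hu _ _ hcol hfu => hbound u
    (isCollisionFreeMotion_of_contDiff hu fun t _ i j => not_imp_not.1 (hcol t i j))
    ((hf u).symm.trans_le hfu)⟩
end
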